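/- arXiv:2107.03855 — 2 statements merged into one kernel-verified Lean document; each statement's English description precedes it below -/
import Mathlib

section
/- Let h : (0,∞) × [2,∞) → ℝ be a function, and let z ≥ 1 and M ≥ 1 be real numbers such that for all x > 0 and y ≥ 2 one has h(x,y) ≥ 1_{[1,∞)}(x) + Σ_{z < p ≤ min(y, √(x/M))} h(x/p, p), where the sum is over primes p. Then for all x > 0 and y ≥ 2, one has h(x,y) ≥ A(x/M, y, z). -/
/-- `Pmax n` is the largest prime factor of `n`, with the convention `Pmax 1 = 1`. -/
def Pmax (n : ℕ) : ℕ := if n ≤ 1 then 1 else n.primeFactors.sup id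

/-- The Schinzel–Szekeres function: if `n = p₁ p₂ ⋯ p_Ω` with `p₁ ≥ p₂ ≥ ⋯ ≥ p_Ω` prime,
`SS n = max_{1 ≤ k ≤ Ω} p₁ ⋯ p_{k-1} p_k²`, and `SS 1 = 1`.
(`Nat.primeFactorsList n` is the *increasing* list of prime factors with multiplicity;
the value produced for the index `j` is the one for `k = Ω - j`.) -/
def SS (n : ℕ) : ℕ :=
  ((List.range n.primeFactorsList.length).map
    (fun j => (n.primeFactorsList.drop j).headI * (n.primeFactorsList.drop j).prod)).foldr max 1

/-- A chain in the divisor graph: a finite sequence of pairwise distinct positive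
integers in which any two consecutive terms are adjacent in the divisor graph
(the smaller divides the larger). -/
def IsDivChain (l : List ℕ) : Prop :=
  l.Nodup ∧ (∀ n ∈ l, 0 < n) ∧ l.Chain' (fun a b => a ∣ b ∨ b ∣ a)

/-- `Axyz x y z = #{n ≥ 1 : n ≤ x, P(n) ≤ y, P⁻(n) > z and S(n) ≤ x}`
(the condition `P⁻(n) > z` is expressed as: every prime factor of `n` exceeds `z`,
which is vacuously true for `n = 1`, matching `P⁻(1) = +∞`). -/
noncomputable def Axyz (x y z : ℝ) : ℕ :=
  {n : ℕ | 1 ≤ n ∧ (n : ℝ) ≤ x ∧ (Pmax n : ℝ) ≤ y ∧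
    (∀ p : ℕ, p.Prime → p ∣ n → z < (p : ℝ)) ∧ (SS n : ℝ) ≤ x}.ncard

/-!
If `n > 1` is counted by `A(x, y, z)` and `p = P(n)`, then `S(n) = p * max p (S (n / p))`. Hence
`S(n) ≤ x` forces `p ≤ √x` and `S(n / p) ≤ x / p`, so `n / p` is counted by `A(x / p, p, z)`. Thus
`A` is a subsolution of the recursion of which `h` is a supersolution. Each step of the recursion
divides `x` by some `p ≥ 2`, and no `p` is available once `x` is small, so the two can be compared
by induction on `⌊x⌋`.
-/

theorem Pmax_le_iff {n k : ℕ} (hk : 1 ≤ k) : Pmax n ≤ k ↔ ∀ q ∈ n.primeFactors, q ≤ k := by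
  unfold Pmax
  split_ifs with hn
  · interval_cases n <;> simpa using hk
  · simp only [Finset.sup_le_iff, id]

theorem Pmax_mem_primeFactors {n : ℕ} (hn : 1 < n) : Pmax n ∈ n.primeFactors := by
  obtain ⟨q, hq, hsup⟩ :=
    Finset.exists_mem_eq_sup n.primeFactors (Nat.nonempty_primeFactors.2 hn) id
  rwa [Pmax, if_neg hn.not_ge, hsup]

theorem exists_eq_Pmax_mul {n : ℕ} (hn : 1 < n) :
    ∃ m, m ≠ 0 ∧ Pmax m ≤ Pmax n ∧ n = Pmax n * m := by
  have hmem := Pmax_mem_primeFactors hn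
  have hone : 1 ≤ Pmax n := (Nat.prime_of_mem_primeFactors hmem).one_le
  obtain ⟨m, hm⟩ := Nat.dvd_of_mem_primeFactors hmem
  have hmn : m ∣ n := ⟨Pmax n, by rwa [mul_comm]⟩
  refine ⟨m, ne_zero_of_dvd_ne_zero (by lia) hmn, ?_, hm⟩
  exact (Pmax_le_iff hone).2 fun q hq ↦
    (Pmax_le_iff hone).1 le_rfl q (Nat.primeFactors_mono hmn (by lia) hq)

theorem map_headI_mul_prod_drop_concat {R : Type*} [CommMonoid R] [Inhabited R] (l : List R)
    (a : R) :
    (List.range (l ++ [a]).length).map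
        (fun j ↦ ((l ++ [a]).drop j).headI * ((l ++ [a]).drop j).prod) =
      ((List.range l.length).map fun j ↦ (l.drop j).headI * (l.drop j).prod).map (a * ·) ++
        [a * a] := by
  rw [List.length_append, List.length_singleton, List.range_succ, List.map_append, List.map_map]
  congr 1
  · refine List.map_congr_left fun j hj ↦ ?_
    have hj : j < l.length := List.mem_range.1 hj
    rw [List.drop_append_of_le_length hj.le, Function.comp_apply, List.drop_eq_getElem_cons hj]
    simp only [List.cons_append, List.headI_cons, List.prod_cons, List.prod_append,
      List.prod_nil, mul_one]
    ac_rfl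
  · simp

section PrimeMul

variable {p m : ℕ} (hp : p.Prime) (hm : m ≠ 0) (hmp : Pmax m ≤ p)

include hp hm hmp

theorem primeFactorsList_prime_mul :
    (p * m).primeFactorsList = m.primeFactorsList ++ [p] := by
  refine List.Perm.eq_of_sortedLE (Nat.primeFactorsList_sorted _) ?_ ?_
  · refine (List.pairwise_append.2 ⟨(Nat.primeFactorsList_sorted m).pairwise,
      List.pairwise_singleton _ _, fun q hq r hr ↦ ?_⟩).sortedLE
    rw [List.mem_singleton.1 hr]
    exact (Pmax_le_iff hp.one_le).1 hmp q (List.mem_toFinset.2 hq)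
  · refine (Nat.perm_primeFactorsList_mul hp.ne_zero hm).trans ?_
    rw [Nat.primeFactorsList_prime hp]
    exact List.perm_append_comm

theorem SS_prime_mul : SS (p * m) = p * max p (SS m) := by
  let products := (List.range m.primeFactorsList.length).map
    fun j ↦ (m.primeFactorsList.drop j).headI * (m.primeFactorsList.drop j).prod
  have SS_eq : SS m = products.foldr max 1 := rfl
  calc SS (p * m)
      = (products.map (p * ·) ++ [p * p]).foldr max 1 := by
        rw [SS, primeFactorsList_prime_mul hp hm hmp, map_headI_mul_prod_drop_concat]
    _ = (products.map (p * ·)).foldr max (p * p) := by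
        rw [List.foldr_append, List.foldr_cons, List.foldr_nil,
          max_eq_left (Nat.mul_pos hp.pos hp.pos)]
    _ = p * products.foldr max p := by
        rw [List.foldr_map]
        exact List.foldr_hom (p * ·) fun a b ↦ Nat.mul_max_mul_left p a b
    _ = p * max p (SS m) := by
        rw [SS_eq, max_comm, ← List.foldr_assoc (op := max), max_eq_right hp.one_le]

end PrimeMul

/-- The set of integers counted by `Axyz x y z`. -/
def AxyzSet (x y z : ℝ) : Set ℕ :=
  {n : ℕ | 1 ≤ n ∧ (n : ℝ) ≤ x ∧ (Pmax n : ℝ) ≤ y ∧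
    (∀ p : ℕ, p.Prime → p ∣ n → z < (p : ℝ)) ∧ (SS n : ℝ) ≤ x}

theorem Axyz_eq_ncard (x y z : ℝ) : Axyz x y z = (AxyzSet x y z).ncard := rfl

theorem finite_AxyzSet (x y z : ℝ) : (AxyzSet x y z).Finite :=
  (Set.finite_Iic ⌊x⌋₊).subset fun _ hn ↦ Nat.le_floor hn.2.1

theorem Axyz_eq_zero_of_lt_one {x : ℝ} (hx : x < 1) (y z : ℝ) : Axyz x y z = 0 := by
  rw [Axyz_eq_ncard, Set.ncard_eq_zero (finite_AxyzSet x y z), Set.eq_empty_iff_forall_notMem]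
  rintro n ⟨one_le, le_x, -⟩
  exact (hx.trans_le (Nat.one_le_cast.2 one_le)).not_ge le_x

/-- The primes in the interval `(z, t]`, the range of summation in Buchstab-type recursions.
The redundant bound `⌊t⌋₊` makes it a `Finset`. -/
noncomputable def primesIoc (z t : ℝ) : Finset ℕ :=
  (Finset.range (⌊t⌋₊ + 1)).filter fun p : ℕ ↦ p.Prime ∧ z < (p : ℝ) ∧ (p : ℝ) ≤ t

theorem mem_primesIoc {z t : ℝ} {p : ℕ} :
    p ∈ primesIoc z t ↔ p.Prime ∧ z < (p : ℝ) ∧ (p : ℝ) ≤ t := by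
  simp only [primesIoc, Finset.mem_filter, Finset.mem_range, Nat.lt_succ_iff, and_iff_right_iff_imp]
  exact fun hp ↦ Nat.le_floor hp.2.2

theorem mem_primesIoc_and_mem_AxyzSet_of_mul_mem {x y z : ℝ} {p m : ℕ} (hp : p.Prime)
    (hm : m ≠ 0) (hmp : Pmax m ≤ p) (hpy : (p : ℝ) ≤ y) (hmem : p * m ∈ AxyzSet x y z) :
    p ∈ primesIoc z (min y √x) ∧ m ∈ AxyzSet (x / p) p z := by
  obtain ⟨-, mul_le, -, lt_of_dvd, SS_le⟩ := hmem
  have hp0 : (0 : ℝ) < p := Nat.cast_pos.2 hp.pos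
  rw [SS_prime_mul hp hm hmp, Nat.cast_mul, Nat.cast_max, ← le_div_iff₀' hp0, max_le_iff] at SS_le
  obtain ⟨p_le, SS_m_le⟩ := SS_le
  have le_sqrt : (p : ℝ) ≤ √x := Real.le_sqrt_of_sq_le (by rwa [sq, ← le_div_iff₀ hp0])
  refine ⟨mem_primesIoc.2 ⟨hp, lt_of_dvd p hp (dvd_mul_right p m), le_min hpy le_sqrt⟩,
    Nat.one_le_iff_ne_zero.2 hm, ?_, Nat.cast_le.2 hmp,
    fun q hq hqm ↦ lt_of_dvd q hq (hqm.mul_left p), SS_m_le⟩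
  rwa [le_div_iff₀' hp0, ← Nat.cast_mul]

theorem AxyzSet_subset (x y z : ℝ) :
    AxyzSet x y z ⊆
      {1} ∪ ⋃ p ∈ primesIoc z (min y √x), (p * ·) '' AxyzSet (x / p) p z := by
  intro n hn
  rcases hn.1.eq_or_lt with rfl | one_lt
  · exact Or.inl rfl
  · obtain ⟨m, hm, hmp, hnm⟩ := exists_eq_Pmax_mul one_lt
    have hprime := Nat.prime_of_mem_primeFactors (Pmax_mem_primeFactors one_lt)
    have hPy := hn.2.2.1
    obtain ⟨hP, hmA⟩ := mem_primesIoc_and_mem_AxyzSet_of_mul_mem hprime hm hmp hPy (hnm ▸ hn)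
    exact Or.inr (Set.mem_biUnion hP ⟨m, hmA, hnm.symm⟩)

theorem Axyz_le_one_add_sum (x y z : ℝ) :
    Axyz x y z ≤ 1 + ∑ p ∈ primesIoc z (min y √x), Axyz (x / p) p z := by
  let parts := ⋃ p ∈ primesIoc z (min y √x), (p * ·) '' AxyzSet (x / p) p z
  have parts_finite : parts.Finite :=
    (Finset.finite_toSet _).biUnion fun p _ ↦ (finite_AxyzSet (x / p) p z).image _
  calc Axyz x y z
      ≤ ({1} ∪ parts).ncard :=
        Set.ncard_le_ncard (AxyzSet_subset x y z) ((Set.finite_singleton 1).union parts_finite)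
    _ ≤ 1 + parts.ncard := by
        simpa only [Set.ncard_singleton] using Set.ncard_union_le {1} parts
    _ ≤ 1 + ∑ p ∈ primesIoc z (min y √x), ((p * ·) '' AxyzSet (x / p) p z).ncard := by
        gcongr
        exact Finset.set_ncard_biUnion_le _ _
    _ ≤ 1 + ∑ p ∈ primesIoc z (min y √x), Axyz (x / p) p z := by
        gcongr with p
        exact Set.ncard_image_le (finite_AxyzSet (x / p) p z)

theorem Axyz_le_indicator_add_sum (x y z : ℝ) :
    Axyz x y z ≤
      (if 1 ≤ x then 1 else 0) + ∑ p ∈ primesIoc z (min y √x), Axyz (x / p) p z := by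
  split_ifs with hx
  · exact Axyz_le_one_add_sum x y z
  · rw [Axyz_eq_zero_of_lt_one (not_le.1 hx)]
    exact Nat.zero_le _

theorem Axyz_div_le_indicator_add_sum {x M : ℝ} (hx : 0 ≤ x) (hM : 1 ≤ M) (y z : ℝ) :
    (Axyz (x / M) y z : ℝ) ≤
      (if 1 ≤ x then 1 else 0) +
        ∑ p ∈ primesIoc z (min y √(x / M)), (Axyz (x / p / M) p z : ℝ) := by
  have one_le_of_div : 1 ≤ x / M → 1 ≤ x := fun hxM ↦ hxM.trans (div_le_self hx hM)
  have indicator_le : (if 1 ≤ x / M then (1 : ℝ) else 0) ≤ if 1 ≤ x then 1 else 0 := by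
    split_ifs <;> simp_all
  calc (Axyz (x / M) y z : ℝ)
      ≤ (if 1 ≤ x / M then 1 else 0) +
          ∑ p ∈ primesIoc z (min y √(x / M)), (Axyz (x / M / p) p z : ℝ) := by
        exact_mod_cast Axyz_le_indicator_add_sum (x / M) y z
    _ ≤ (if 1 ≤ x then 1 else 0) +
          ∑ p ∈ primesIoc z (min y √(x / M)), (Axyz (x / p / M) p z : ℝ) := by
        simp_rw [div_right_comm x M]
        gcongr

theorem le_of_mem_primesIoc_of_le_sqrt {x z t : ℝ} {p : ℕ} (ht : t ≤ √x) (hp : p ∈ primesIoc z t) :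
    (p : ℝ) ≤ x := by
  obtain ⟨p_prime, -, p_le⟩ := mem_primesIoc.1 hp
  calc (p : ℝ) ≤ (p : ℝ) ^ 2 := le_self_pow₀ (Nat.one_le_cast.2 p_prime.one_le) two_ne_zero
    _ ≤ x := (Real.le_sqrt' (Nat.cast_pos.2 p_prime.pos)).1 (p_le.trans ht)

theorem le_of_buchstab_recursion {R : Type*} [AddCommMonoid R] [PartialOrder R]
    [IsOrderedAddMonoid R] {f g h : ℝ → ℝ → R} {P : ℝ → ℝ → Finset ℕ}
    (hP : ∀ x y, 0 < x → 2 ≤ y → ∀ p ∈ P x y, 2 ≤ p ∧ (p : ℝ) ≤ x)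
    (hf : ∀ x y, 0 < x → 2 ≤ y → f x y ≤ g x y + ∑ p ∈ P x y, f (x / p) p)
    (hh : ∀ x y, 0 < x → 2 ≤ y → g x y + ∑ p ∈ P x y, h (x / p) p ≤ h x y)
    (x y : ℝ) (hx : 0 < x) (hy : 2 ≤ y) : f x y ≤ h x y := by
  induction hN : ⌊x⌋₊ using Nat.strong_induction_on generalizing x y with
  | h N ih =>
    subst hN
    have term_le : ∀ p ∈ P x y, f (x / p) p ≤ h (x / p) p := by
      intro p hp
      obtain ⟨two_le, le_x⟩ := hP x y hx hy p hp
      have p_pos : 0 < p := by lia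
      have floor_lt : ⌊x / p⌋₊ < ⌊x⌋₊ := by
        rw [Nat.floor_div_natCast]
        exact Nat.div_lt_self (p_pos.trans_le (Nat.le_floor le_x)) two_le
      exact ih _ floor_lt (x / p) p (div_pos hx (Nat.cast_pos.2 p_pos)) (mod_cast two_le) rfl
    calc f x y ≤ g x y + ∑ p ∈ P x y, f (x / p) p := hf x y hx hy
      _ ≤ g x y + ∑ p ∈ P x y, h (x / p) p := by gcongr with p hp; exact term_le p hp
      _ ≤ h x y := hh x y hx hy

/-- Discrete bidimensional Gronwall lemma: if `h` satisfies the Buchstab-type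
inequality `h(x,y) ≥ 1_{[1,∞)}(x) + Σ_{z < p ≤ min(y, √(x/M))} h(x/p, p)` for all
`x > 0`, `y ≥ 2` (sum over primes `p`), where `z ≥ 1` and `M ≥ 1`, then
`h(x,y) ≥ A(x/M, y, z)` for all `x > 0`, `y ≥ 2`. -/
theorem stmt_9 (h : ℝ → ℝ → ℝ) (z M : ℝ) (hz : 1 ≤ z) (hM : 1 ≤ M)
    (hyp : ∀ x y : ℝ, 0 < x → 2 ≤ y →
      (if (1 : ℝ) ≤ x then (1 : ℝ) else 0) +
          ∑ p ∈ (Finset.range (⌊min y (Real.sqrt (x / M))⌋₊ + 1)).filter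
              (fun p : ℕ => p.Prime ∧ z < (p : ℝ) ∧ (p : ℝ) ≤ min y (Real.sqrt (x / M))),
            h (x / p) p ≤ h x y) :
    ∀ x y : ℝ, 0 < x → 2 ≤ y → (Axyz (x / M) y z : ℝ) ≤ h x y := by
  refine le_of_buchstab_recursion (P := fun x y ↦ primesIoc z (min y √(x / M)))
    (f := fun x y ↦ (Axyz (x / M) y z : ℝ)) (fun x y hx _ p hp ↦ ⟨?_, ?_⟩) (fun x y hx _ ↦ ?_) hyp
  · exact (mem_primesIoc.1 hp).1.two_le
  · exact (le_of_mem_primesIoc_of_le_sqrt (min_le_right _ _) hp).trans (div_le_self hx.le hM)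
  · exact Axyz_div_le_indicator_add_sum hx.le hM y z
end

section
/- For every real x ≥ 3^8, there exist two integers A and B of 𝒜*(x,3) such that P(A) = 2 and P(B) = 3. -/
/-- `n ∈ 𝒜*(x,y)`, i.e. `n ≥ 1`, `n > √x`, `P(n) ≤ min(y, √x/27)` and `S(n) ≤ x`. -/
def AstarMem (x y : ℝ) (n : ℕ) : Prop :=
  1 ≤ n ∧ Real.sqrt x < (n : ℝ) ∧ (Pmax n : ℝ) ≤ min y (Real.sqrt x / 27) ∧ (SS n : ℝ) ≤ x

/-! Each term `p₁ ⋯ p_{k-1} p_k²` is a divisor of `n` times a prime factor of `n`, so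
`S(n) ≤ P(n) n`. The least power `p ^ (k + 1)` above `√x` then satisfies
`S(p ^ (k + 1)) ≤ p² p ^ k ≤ p² √x`, which is at most `x` as soon as `p² ≤ √x`. -/

theorem le_pmax_of_mem_primeFactors {n p : ℕ} (hp : p ∈ n.primeFactors) : p ≤ Pmax n := by
  have one_lt_n : 1 < n := Nat.nonempty_primeFactors.mp ⟨p, hp⟩
  rw [Pmax, if_neg one_lt_n.not_ge]
  exact Finset.le_sup (f := id) hp

theorem one_le_pmax (n : ℕ) : 1 ≤ Pmax n := by
  rcases le_or_gt n 1 with n_le_one | one_lt_n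
  · rw [Pmax, if_pos n_le_one]
  · obtain ⟨p, hp⟩ := Nat.nonempty_primeFactors.mpr one_lt_n
    exact (Nat.pos_of_mem_primeFactors hp).trans_le (le_pmax_of_mem_primeFactors hp)

theorem pmax_prime_pow {p k : ℕ} (hp : p.Prime) (hk : k ≠ 0) : Pmax (p ^ k) = p := by
  rw [Pmax, if_neg (Nat.one_lt_pow hk hp.one_lt).not_ge, Nat.primeFactors_prime_pow hk hp,
    Finset.sup_singleton, id]

theorem ss_le_of_forall_lt {n M : ℕ} (hM : 1 ≤ M)
    (h : ∀ j < n.primeFactorsList.length,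
      (n.primeFactorsList.drop j).headI * (n.primeFactorsList.drop j).prod ≤ M) :
    SS n ≤ M := by
  refine List.foldrRecOn (motive := (· ≤ M)) _ max hM fun b hb a ha => max_le ?_ hb
  obtain ⟨j, hj, rfl⟩ := List.mem_map.mp ha
  exact h j (List.mem_range.mp hj)

theorem ss_le_pmax_mul_self {n : ℕ} (hn : n ≠ 0) : SS n ≤ Pmax n * n := by
  have n_pos : 0 < n := Nat.pos_of_ne_zero hn
  refine ss_le_of_forall_lt (Nat.mul_pos (one_le_pmax n) n_pos) fun j hj => Nat.mul_le_mul ?_ ?_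
  · rw [List.drop_eq_getElem_cons hj]
    exact le_pmax_of_mem_primeFactors (Nat.mem_primeFactors_iff_mem_primeFactorsList.mpr
      (List.getElem_mem hj))
  · have prod_dvd : (n.primeFactorsList.drop j).prod ∣ n := by
      simpa only [Nat.prod_primeFactorsList hn] using
        (List.drop_sublist j n.primeFactorsList).prod_dvd_prod
    exact Nat.le_of_dvd n_pos prod_dvd

theorem exists_astarMem_pmax_eq {x y : ℝ} {p : ℕ} (hp : p.Prime)
    (hpy : (p : ℝ) ≤ min y (√x / 27)) (hpx : (p : ℝ) ^ 2 ≤ √x) :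
    ∃ n, AstarMem x y n ∧ Pmax n = p := by
  have one_lt_p : (1 : ℝ) < p := mod_cast hp.one_lt
  have one_le_sqrt : 1 ≤ √x := (one_le_pow₀ one_lt_p.le).trans hpx
  have x_nonneg : 0 ≤ x := (Real.sqrt_pos.mp (one_pos.trans_le one_le_sqrt)).le
  obtain ⟨k, pow_le, lt_pow⟩ := exists_nat_pow_near one_le_sqrt one_lt_p
  have pmax_pow : Pmax (p ^ (k + 1)) = p := pmax_prime_pow hp k.succ_ne_zero
  have prime_pow_pos : 0 < p ^ (k + 1) := Nat.pow_pos hp.pos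
  have ss_le_x : (SS (p ^ (k + 1)) : ℝ) ≤ x :=
    calc (SS (p ^ (k + 1)) : ℝ) ≤ p * p ^ (k + 1) := by
          exact_mod_cast pmax_pow ▸ ss_le_pmax_mul_self prime_pow_pos.ne'
      _ = p ^ 2 * p ^ k := by ring
      _ ≤ √x * √x := by gcongr
      _ = x := Real.mul_self_sqrt x_nonneg
  exact ⟨p ^ (k + 1), ⟨prime_pow_pos, mod_cast lt_pow, pmax_pow.symm ▸ hpy, ss_le_x⟩, pmax_pow⟩

/-- Lemma 8.4: for every real `x ≥ 3⁸`, there exist `A, B ∈ 𝒜*(x,3)` with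
`P(A) = 2` and `P(B) = 3`. -/
theorem stmt_15 (x : ℝ) (hx : (3 : ℝ) ^ 8 ≤ x) :
    ∃ A B : ℕ, AstarMem x 3 A ∧ AstarMem x 3 B ∧ Pmax A = 2 ∧ Pmax B = 3 := by
  have le_sqrt_x : 3 ^ 4 ≤ √x := Real.le_sqrt_of_sq_le (by linarith)
  have exists_mem {p : ℕ} (hp : p.Prime) (hp3 : p ≤ 3) : ∃ n, AstarMem x 3 n ∧ Pmax n = p := by
    have p_le_three : (p : ℝ) ≤ 3 := mod_cast hp3
    exact exists_astarMem_pmax_eq hp (le_min p_le_three (by linarith)) <|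
      calc (p : ℝ) ^ 2 ≤ 3 ^ 2 := by gcongr
        _ ≤ √x := by linarith
  obtain ⟨A, hA, pmax_A⟩ := exists_mem Nat.prime_two (by norm_num)
  obtain ⟨B, hB, pmax_B⟩ := exists_mem Nat.prime_three le_rfl
  exact ⟨A, B, hA, hB, pmax_A, pmax_B⟩
end
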